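/- Let N ≥ 1, s ∈ (0,1), let G be a Young function satisfying the growth condition with exponents 1 < p⁻ ≤ p⁺ < ∞, and let Ω ⊆ ℝ^N be a nonempty open set. Let δ(x) := dist(x, ∂Ω). Assume: (i) there is c₁ > 0 such that ∫_{ℝ^N∖Ω} |x−y|^{−(N+sp⁻)} dy ≤ c₁ δ(x)^{−sp⁻} for every x ∈ Ω, and (ii) the fractional Orlicz–Hardy inequality holds on Ω, i.e. there is c₂ > 0 such that ∫_Ω G(u(x)/δ(x)^s) dx ≤ c₂ ∬_{Ω×Ω} G(|u(x)−u(y)|/|x−y|^s) |x−y|^{−N} dx dy for every nonnegative u ∈ C_c^∞(Ω). Then there exists C > 0 such that for every nonnegative u ∈ C_c^∞(Ω), ∬_{ℝ^N×ℝ^N} G(|u*(x)−u*(y)|/|x−y|^s) |x−y|^{−N} dx dy ≤ C ∬_{Ω×Ω} G(|u(x)−u(y)|/|x−y|^s) |x−y|^{−N} dx dy. -/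

import Mathlib

open MeasureTheory Metric Set Filter
open scoped ENNReal Topology

/-- The volume of the unit ball in `ℝ^N`. -/
noncomputable def ballVol (N : ℕ) : ℝ≥0∞ :=
  volume (Metric.ball (0 : EuclideanSpace ℝ (Fin N)) 1)

/-- The symmetric rearrangement `Ω*` of a set: the open ball centered at the origin
with the same volume. -/
noncomputable def rearrangeSet {N : ℕ} (Ω : Set (EuclideanSpace ℝ (Fin N))) :
    Set (EuclideanSpace ℝ (Fin N)) :=
  Metric.ball 0 (((volume Ω).toReal / (ballVol N).toReal) ^ ((N : ℝ)⁻¹))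

/-- The symmetric decreasing rearrangement `u*` of a nonnegative function:
`u* x = sup {t > 0 : |{u > t}| > α_N |x|^N}` (with `sup ∅ = 0`). -/
noncomputable def rearrangeFun {N : ℕ} (u : EuclideanSpace ℝ (Fin N) → ℝ)
    (x : EuclideanSpace ℝ (Fin N)) : ℝ :=
  sSup {t : ℝ | 0 < t ∧ ballVol N * ENNReal.ofReal (‖x‖ ^ N) < volume {y | t < u y}}

/-- `G` is a Young function with right-continuous nondecreasing density `g`. -/
structure IsYoungPair (G g : ℝ → ℝ) : Prop where
  g_zero : g 0 = 0
  g_pos : ∀ t > 0, 0 < g t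
  g_mono : MonotoneOn g (Set.Ici 0)
  g_rightCont : ∀ t ≥ 0, ContinuousWithinAt g (Set.Ici t) t
  g_tendsto : Filter.Tendsto g Filter.atTop Filter.atTop
  G_eq : ∀ t ≥ 0, G t = ∫ τ in (0:ℝ)..t, g τ

/-- The growth condition `pm ≤ t g(t)/G(t) ≤ pp` with exponents `1 < pm ≤ pp < ∞`. -/
def GrowthCond (G g : ℝ → ℝ) (pm pp : ℝ) : Prop :=
  1 < pm ∧ pm ≤ pp ∧ ∀ t > 0, pm * G t ≤ t * g t ∧ t * g t ≤ pp * G t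

/-- The fractional Orlicz–Sobolev seminorm
`∬_{A×B} G(|u x − u y|/|x−y|^s) |x−y|^{−N} dx dy`. -/
noncomputable def fracSeminorm {N : ℕ} (s : ℝ) (G : ℝ → ℝ)
    (u : EuclideanSpace ℝ (Fin N) → ℝ) (A B : Set (EuclideanSpace ℝ (Fin N))) : ℝ≥0∞ :=
  ∫⁻ x in A, ∫⁻ y in B,
    ENNReal.ofReal (G (|u x - u y| / dist x y ^ s) / dist x y ^ (N : ℝ))

/-- `u ∈ C_c^∞(Ω)`. -/
def IsTestFun {N : ℕ} (Ω : Set (EuclideanSpace ℝ (Fin N)))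
    (u : EuclideanSpace ℝ (Fin N) → ℝ) : Prop :=
  ContDiff ℝ (⊤ : ℕ∞) u ∧ HasCompactSupport u ∧ tsupport u ⊆ Ω

section Polarization

variable {E : Type*} [NormedAddCommGroup E] [InnerProductSpace ℝ E]

/-- The signed distance from the hyperplane `{x | ⟪n, x⟫ = c}` (for a unit normal `n`). -/
def hyperplaneHeight (n : E) (c : ℝ) (x : E) : ℝ := inner ℝ n x - c

/-- The reflection across the hyperplane `{x | ⟪n, x⟫ = c}` (for a unit normal `n`). -/
noncomputable def hyperplaneReflection (n : E) (c : ℝ) (x : E) : E :=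
  x - (2 * hyperplaneHeight n c x) • n

/-- The polarization (two-point rearrangement) of `v`: the larger of the values at `x` and at
its mirror image is placed on the side `⟪n, x⟫ ≥ c`. -/
noncomputable def polarize (n : E) (c : ℝ) (v : E → ℝ) (x : E) : ℝ :=
  if 0 ≤ hyperplaneHeight n c x then max (v x) (v (hyperplaneReflection n c x))
  else min (v x) (v (hyperplaneReflection n c x))

variable {n : E} {c : ℝ}

lemma continuous_hyperplaneReflection : Continuous (hyperplaneReflection n c) := by
  unfold hyperplaneReflection hyperplaneHeight; fun_prop

lemma hyperplaneHeight_reflection (hn : ‖n‖ = 1) (x : E) :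
    hyperplaneHeight n c (hyperplaneReflection n c x) = -hyperplaneHeight n c x := by
  unfold hyperplaneReflection hyperplaneHeight
  rw [inner_sub_right, inner_smul_right, real_inner_self_eq_norm_sq, hn]
  ring

lemma hyperplaneReflection_reflection (hn : ‖n‖ = 1) (x : E) :
    hyperplaneReflection n c (hyperplaneReflection n c x) = x := by
  have h := hyperplaneHeight_reflection (c := c) hn x
  rw [hyperplaneReflection, h, hyperplaneReflection]
  module

lemma hyperplaneReflection_eq_self {x : E} (hx : hyperplaneHeight n c x = 0) :
    hyperplaneReflection n c x = x := by
  simp [hyperplaneReflection, hx]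

lemma dist_reflection_right_sq (hn : ‖n‖ = 1) (x y : E) :
    dist x (hyperplaneReflection n c y) ^ 2 =
      dist x y ^ 2 + 4 * (hyperplaneHeight n c x * hyperplaneHeight n c y) := by
  have h : x - hyperplaneReflection n c y = (x - y) + (2 * hyperplaneHeight n c y) • n := by
    unfold hyperplaneReflection; module
  rw [dist_eq_norm, dist_eq_norm, h, norm_add_sq_real, norm_smul, hn, inner_smul_right,
    real_inner_comm, inner_sub_right, Real.norm_eq_abs, mul_one, sq_abs]
  unfold hyperplaneHeight
  ring

lemma dist_le_dist_reflection_right (hn : ‖n‖ = 1) {x y : E}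
    (hxy : 0 ≤ hyperplaneHeight n c x * hyperplaneHeight n c y) :
    dist x y ≤ dist x (hyperplaneReflection n c y) := by
  refine le_of_sq_le_sq ?_ dist_nonneg
  rw [dist_reflection_right_sq hn]
  linarith

lemma dist_reflection_reflection (hn : ‖n‖ = 1) (x y : E) :
    dist (hyperplaneReflection n c x) (hyperplaneReflection n c y) = dist x y := by
  refine (sq_eq_sq₀ dist_nonneg dist_nonneg).1 ?_
  rw [dist_reflection_right_sq hn, dist_comm _ y, dist_reflection_right_sq hn,
    hyperplaneHeight_reflection hn, dist_comm y x]
  ring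

lemma dist_reflection_left (hn : ‖n‖ = 1) (x y : E) :
    dist (hyperplaneReflection n c x) y = dist x (hyperplaneReflection n c y) := by
  rw [← dist_reflection_reflection hn (hyperplaneReflection n c x) y,
    hyperplaneReflection_reflection hn]

lemma norm_sq_reflection (hn : ‖n‖ = 1) (x : E) :
    ‖hyperplaneReflection n c x‖ ^ 2 = ‖x‖ ^ 2 - 4 * (c * hyperplaneHeight n c x) := by
  have h := dist_reflection_right_sq (c := c) hn 0 x
  simp only [dist_zero_left] at h
  rw [h]
  simp [hyperplaneHeight]
  ring

lemma norm_le_norm_reflection (hn : ‖n‖ = 1) (hc : c ≤ 0) {x : E}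
    (hx : 0 ≤ hyperplaneHeight n c x) : ‖x‖ ≤ ‖hyperplaneReflection n c x‖ := by
  refine le_of_sq_le_sq ?_ (norm_nonneg _)
  rw [norm_sq_reflection hn]
  nlinarith

/-- Two points of different norm are exchanged by the reflection across a hyperplane having the
origin and the point closer to it on its nonnegative side. -/
lemma exists_hyperplaneReflection_eq {p q : E} (h : ‖p‖ < ‖q‖) :
    ∃ (n : E) (c : ℝ), ‖n‖ = 1 ∧ c ≤ 0 ∧ 0 < hyperplaneHeight n c p ∧
      hyperplaneReflection n c p = q := by
  have hpq : 0 < ‖p - q‖ := norm_pos_iff.2 (sub_ne_zero.2 (by rintro rfl; exact lt_irrefl _ h))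
  set d := ‖p - q‖ with hd
  have hd2 : d ^ 2 = ‖p‖ ^ 2 - 2 * inner ℝ p q + ‖q‖ ^ 2 := norm_sub_sq_real p q
  have hlt : ‖p‖ ^ 2 < ‖q‖ ^ 2 := by gcongr
  have hh : hyperplaneHeight (d⁻¹ • (p - q)) ((‖p‖ ^ 2 - ‖q‖ ^ 2) / (2 * d)) p = d / 2 := by
    unfold hyperplaneHeight
    rw [real_inner_smul_left, inner_sub_left, real_inner_self_eq_norm_sq, real_inner_comm]
    field_simp
    linarith
  have hc : (‖p‖ ^ 2 - ‖q‖ ^ 2) / (2 * d) < 0 :=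
    div_neg_of_neg_of_pos (by linarith) (by linarith)
  refine ⟨d⁻¹ • (p - q), (‖p‖ ^ 2 - ‖q‖ ^ 2) / (2 * d), ?_, hc.le, ?_, ?_⟩
  · rw [norm_smul, norm_inv, norm_norm, ← hd, inv_mul_cancel₀ hpq.ne']
  · rw [hh]; positivity
  · rw [hyperplaneReflection, hh, smul_smul]
    have : 2 * (d / 2) * d⁻¹ = 1 := by field_simp
    rw [this]; module

lemma polarize_of_nonneg {v : E → ℝ} {x : E} (hx : 0 ≤ hyperplaneHeight n c x) :
    polarize n c v x = max (v x) (v (hyperplaneReflection n c x)) := if_pos hx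

lemma polarize_of_nonpos {v : E → ℝ} {x : E} (hx : hyperplaneHeight n c x ≤ 0) :
    polarize n c v x = min (v x) (v (hyperplaneReflection n c x)) := by
  rcases hx.lt_or_eq with hx | hx
  · exact if_neg hx.not_ge
  · rw [polarize, if_pos hx.ge, hyperplaneReflection_eq_self hx, max_self, min_self]

lemma polarize_reflection_of_nonneg (hn : ‖n‖ = 1) {v : E → ℝ} {x : E}
    (hx : 0 ≤ hyperplaneHeight n c x) :
    polarize n c v (hyperplaneReflection n c x) = min (v x) (v (hyperplaneReflection n c x)) := by
  rw [polarize_of_nonpos (by rw [hyperplaneHeight_reflection hn]; linarith),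
    hyperplaneReflection_reflection hn, min_comm]

lemma polarize_mem_Icc {v : E → ℝ} {M : ℝ} (hv : ∀ x, v x ∈ Icc 0 M) (x : E) :
    polarize n c v x ∈ Icc 0 M := by
  have h₁ := hv x
  have h₂ := hv (hyperplaneReflection n c x)
  unfold polarize
  split_ifs
  · rcases max_choice (v x) (v (hyperplaneReflection n c x)) with h | h <;> rwa [h]
  · rcases min_choice (v x) (v (hyperplaneReflection n c x)) with h | h <;> rwa [h]

lemma polarize_eq_zero (hn : ‖n‖ = 1) (hc : c ≤ 0) {v : E → ℝ} (hv : ∀ x, 0 ≤ v x) {R : ℝ}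
    (hR : ∀ x, R < ‖x‖ → v x = 0) {x : E} (hx : R < ‖x‖) : polarize n c v x = 0 := by
  rcases le_total 0 (hyperplaneHeight n c x) with h | h
  · rw [polarize_of_nonneg h, hR x hx, hR _ (hx.trans_le (norm_le_norm_reflection hn hc h)),
      max_self]
  · rw [polarize_of_nonpos h, hR x hx, min_eq_left (hv _)]

lemma lipschitzWith_polarize (hn : ‖n‖ = 1) {v : E → ℝ} {K : NNReal} (hv : LipschitzWith K v) :
    LipschitzWith K (polarize n c v) := by
  have key : ∀ x y, hyperplaneHeight n c x ≤ 0 → 0 ≤ hyperplaneHeight n c y →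
      |polarize n c v x - polarize n c v y| ≤ K * dist x y := by
    intro x y hx hy
    have hd : dist x (hyperplaneReflection n c y) ≤ dist x y := by
      have := dist_le_dist_reflection_right (c := c) hn (x := x)
        (y := hyperplaneReflection n c y)
        (by rw [hyperplaneHeight_reflection hn]; nlinarith)
      rwa [hyperplaneReflection_reflection hn] at this
    have hK : (K : ℝ) * dist x (hyperplaneReflection n c y) ≤ K * dist x y := by gcongr
    have h₁ := hv.dist_le_mul x y
    have h₂ := (hv.dist_le_mul x (hyperplaneReflection n c y)).trans hK
    have h₃ := hv.dist_le_mul (hyperplaneReflection n c x) y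
    rw [dist_reflection_left hn] at h₃
    have h₃ := h₃.trans hK
    have h₄ := hv.dist_le_mul (hyperplaneReflection n c x) (hyperplaneReflection n c y)
    rw [dist_reflection_reflection hn] at h₄
    rw [Real.dist_eq] at h₁ h₂ h₃ h₄
    rw [polarize_of_nonneg hy, polarize_of_nonpos hx]
    rcases min_choice (v x) (v (hyperplaneReflection n c x)) with h | h <;> rw [h] <;>
    rcases max_choice (v y) (v (hyperplaneReflection n c y)) with h | h <;> rw [h] <;>
    assumption
  refine LipschitzWith.of_dist_le_mul fun x y ↦ ?_
  have h₁ := hv.dist_le_mul x y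
  have h₂ := hv.dist_le_mul (hyperplaneReflection n c x) (hyperplaneReflection n c y)
  rw [dist_reflection_reflection hn] at h₂
  rw [Real.dist_eq] at *
  rcases le_total 0 (hyperplaneHeight n c x) with hx | hx <;>
    rcases le_total 0 (hyperplaneHeight n c y) with hy | hy
  · rw [polarize_of_nonneg hx, polarize_of_nonneg hy]
    exact (abs_max_sub_max_le_max _ _ _ _).trans (max_le h₁ h₂)
  · rw [abs_sub_comm, dist_comm]; exact key y x hy hx
  · exact key x y hx hy
  · rw [polarize_of_nonpos hx, polarize_of_nonpos hy]
    exact (abs_min_sub_min_le_max _ _ _ _).trans (max_le h₁ h₂)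

lemma apply_polarize_add {α : Type*} [AddCommMonoid α] (hn : ‖n‖ = 1) (φ : ℝ → α)
    (v : E → ℝ) (x : E) :
    φ (polarize n c v x) + φ (polarize n c v (hyperplaneReflection n c x)) =
      φ (v x) + φ (v (hyperplaneReflection n c x)) := by
  have key : ∀ x, 0 ≤ hyperplaneHeight n c x →
      φ (polarize n c v x) + φ (polarize n c v (hyperplaneReflection n c x)) =
        φ (v x) + φ (v (hyperplaneReflection n c x)) := by
    intro x hx
    rw [polarize_of_nonneg hx, polarize_reflection_of_nonneg hn hx]
    rcases le_total (v x) (v (hyperplaneReflection n c x)) with h | h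
    · rw [max_eq_right h, min_eq_left h, add_comm]
    · rw [max_eq_left h, min_eq_right h]
  rcases le_total 0 (hyperplaneHeight n c x) with hx | hx
  · exact key x hx
  · have := key (hyperplaneReflection n c x) (by rw [hyperplaneHeight_reflection hn]; linarith)
    rw [hyperplaneReflection_reflection hn] at this
    rw [add_comm, this, add_comm]

/-- Polarization increases the pairing with a radially decreasing weight, pointwise on pairs of
mirror points. -/
lemma le_polarize_mul_add (hn : ‖n‖ = 1) (hc : c ≤ 0) {w : E → ℝ}
    (hw : ∀ x y, ‖x‖ ≤ ‖y‖ → w y ≤ w x) (v : E → ℝ) (x : E) :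
    v x * w x + v (hyperplaneReflection n c x) * w (hyperplaneReflection n c x) ≤
      polarize n c v x * w x + polarize n c v (hyperplaneReflection n c x) *
        w (hyperplaneReflection n c x) := by
  have key : ∀ x, 0 ≤ hyperplaneHeight n c x →
      v x * w x + v (hyperplaneReflection n c x) * w (hyperplaneReflection n c x) ≤
      polarize n c v x * w x + polarize n c v (hyperplaneReflection n c x) *
        w (hyperplaneReflection n c x) := by
    intro x hx
    have := hw _ _ (norm_le_norm_reflection hn hc hx)
    rw [polarize_of_nonneg hx, polarize_reflection_of_nonneg hn hx]
    rcases le_total (v x) (v (hyperplaneReflection n c x)) with h | h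
    · rw [max_eq_right h, min_eq_left h]; nlinarith
    · rw [max_eq_left h, min_eq_right h]
  rcases le_total 0 (hyperplaneHeight n c x) with hx | hx
  · exact key x hx
  · have := key (hyperplaneReflection n c x) (by rw [hyperplaneHeight_reflection hn]; linarith)
    rw [hyperplaneReflection_reflection hn] at this
    linarith

lemma ConvexOn.sub_add_sub_le {J : ℝ → ℝ} (hJ : ConvexOn ℝ univ J) {a₁ a₂ b₁ b₂ : ℝ}
    (ha : a₂ ≤ a₁) (hb : b₂ ≤ b₁) :
    J (a₁ - b₁) + J (a₂ - b₂) ≤ J (a₁ - b₂) + J (a₂ - b₁) := by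
  rcases (add_nonneg (sub_nonneg.2 ha) (sub_nonneg.2 hb)).eq_or_lt with h | h
  · have h₁ : a₁ = a₂ := by linarith
    have h₂ : b₁ = b₂ := by linarith
    rw [h₁, h₂]
  · set D := (a₁ - a₂) + (b₁ - b₂) with hD
    have e : (a₁ - a₂) / D + (b₁ - b₂) / D = 1 := by rw [← add_div, div_self h.ne']
    have p := div_nonneg (sub_nonneg.2 ha) h.le
    have q := div_nonneg (sub_nonneg.2 hb) h.le
    have h₁ := hJ.2 (mem_univ (a₁ - b₂)) (mem_univ (a₂ - b₁)) p q e
    have h₂ := hJ.2 (mem_univ (a₁ - b₂)) (mem_univ (a₂ - b₁)) q p (by linarith)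
    simp only [smul_eq_mul] at h₁ h₂
    have e₁ : (a₁ - a₂) / D * (a₁ - b₂) + (b₁ - b₂) / D * (a₂ - b₁) = a₁ - b₁ := by
      field_simp; rw [hD]; ring
    have e₂ : (b₁ - b₂) / D * (a₁ - b₂) + (a₁ - a₂) / D * (a₂ - b₁) = a₂ - b₂ := by
      field_simp; rw [hD]; ring
    rw [e₁] at h₁
    rw [e₂] at h₂
    have hp : (a₁ - a₂) / D = 1 - (b₁ - b₂) / D := by linarith
    rw [hp] at h₁ h₂
    linarith

/-- The interaction of two points at distance less than `ρ`. -/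
noncomputable def truncInteraction (ρ : ℝ) (J : ℝ → ℝ) (v : E → ℝ) (x y : E) : ℝ≥0∞ :=
  if dist x y < ρ then ENNReal.ofReal (J (v x - v y)) else 0

/-- The sum of `f` over the orbits of two points under a reflection. -/
noncomputable def reflectionSum (n : E) (c : ℝ) (f : E → E → ℝ≥0∞) (x y : E) : ℝ≥0∞ :=
  (f x y + f (hyperplaneReflection n c x) (hyperplaneReflection n c y)) +
    (f x (hyperplaneReflection n c y) + f (hyperplaneReflection n c x) y)

lemma reflectionSum_reflection_left (hn : ‖n‖ = 1) (f : E → E → ℝ≥0∞) (x y : E) :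
    reflectionSum n c f (hyperplaneReflection n c x) y = reflectionSum n c f x y := by
  unfold reflectionSum
  rw [hyperplaneReflection_reflection hn]
  ring

lemma reflectionSum_reflection_right (hn : ‖n‖ = 1) (f : E → E → ℝ≥0∞) (x y : E) :
    reflectionSum n c f x (hyperplaneReflection n c y) = reflectionSum n c f x y := by
  unfold reflectionSum
  rw [hyperplaneReflection_reflection hn]
  ring

lemma reflectionSum_truncInteraction_polarize_le (hn : ‖n‖ = 1) {ρ : ℝ} {J : ℝ → ℝ}
    (hJ : ConvexOn ℝ univ J) (hJ0 : ∀ a, 0 ≤ J a) (v : E → ℝ) (x y : E) :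
    reflectionSum n c (truncInteraction ρ J (polarize n c v)) x y ≤
      reflectionSum n c (truncInteraction ρ J v) x y := by
  wlog hx : 0 ≤ hyperplaneHeight n c x generalizing x
  · have := this (hyperplaneReflection n c x)
      (by rw [hyperplaneHeight_reflection hn]; linarith)
    simpa only [reflectionSum_reflection_left hn] using this
  wlog hy : 0 ≤ hyperplaneHeight n c y generalizing y
  · have := this (hyperplaneReflection n c y)
      (by rw [hyperplaneHeight_reflection hn]; linarith)
    simpa only [reflectionSum_reflection_right hn] using this
  have hd := dist_le_dist_reflection_right (c := c) hn (mul_nonneg hx hy)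
  unfold reflectionSum truncInteraction
  rw [dist_reflection_reflection hn, dist_reflection_left hn, polarize_of_nonneg hx,
    polarize_of_nonneg hy, polarize_reflection_of_nonneg hn hx,
    polarize_reflection_of_nonneg hn hy]
  generalize v x = a₁, v y = b₁, v (hyperplaneReflection n c x) = a₂,
    v (hyperplaneReflection n c y) = b₂
  have e : ∀ {p q r t : ℝ}, J p + J q ≤ J r + J t → ENNReal.ofReal (J p) + ENNReal.ofReal (J q) ≤
      ENNReal.ofReal (J r) + ENNReal.ofReal (J t) := fun h ↦ by
    rw [← ENNReal.ofReal_add (hJ0 _) (hJ0 _), ← ENNReal.ofReal_add (hJ0 _) (hJ0 _)]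
    exact ENNReal.ofReal_le_ofReal h
  by_cases h₁ : dist x (hyperplaneReflection n c y) < ρ
  · have h₂ := hd.trans_lt h₁
    simp only [h₁, h₂, if_true]
    apply le_of_eq
    rcases le_total a₁ a₂ with ha | ha <;> rcases le_total b₁ b₂ with hb | hb <;>
      simp only [ha, hb, max_eq_left, max_eq_right, min_eq_left, min_eq_right] <;> ring
  · by_cases h₂ : dist x y < ρ
    · simp only [h₁, h₂, if_true, if_false, add_zero]
      rcases le_total a₁ a₂ with ha | ha <;> rcases le_total b₁ b₂ with hb | hb <;>
        simp only [ha, hb, max_eq_left, max_eq_right, min_eq_left, min_eq_right]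
      · rw [add_comm]
      · rw [add_comm (ENNReal.ofReal (J (a₁ - b₁)))]
        exact e (hJ.sub_add_sub_le ha hb)
      · exact e (hJ.sub_add_sub_le ha hb)
      · rfl
    · simp [h₁, h₂]

end Polarization

section PolarizationMeasure

variable {E : Type*} [NormedAddCommGroup E] [InnerProductSpace ℝ E] [FiniteDimensional ℝ E]
  [MeasurableSpace E] [BorelSpace E] {n : E} {c : ℝ}

lemma measurePreserving_hyperplaneReflection (hn : ‖n‖ = 1) :
    MeasurePreserving (hyperplaneReflection n c) (volume : Measure E) volume := by
  have h : hyperplaneReflection n c =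
      (fun x ↦ x + (2 * c) • n) ∘ (Submodule.reflection (ℝ ∙ n)ᗮ) := by
    ext x
    simp only [Function.comp_apply, Submodule.reflection_orthogonal_apply,
      Submodule.reflection_singleton_apply, hn, hyperplaneReflection, hyperplaneHeight]
    simp
    module
  rw [h]
  exact (measurePreserving_add_right volume _).comp (LinearIsometryEquiv.measurePreserving _)

lemma lintegral_comp_reflection (hn : ‖n‖ = 1) {f : E → ℝ≥0∞} (hf : Measurable f) :
    ∫⁻ x, f (hyperplaneReflection n c x) = ∫⁻ x, f x :=
  (measurePreserving_hyperplaneReflection hn).lintegral_comp hf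

lemma lintegral_add_reflection (hn : ‖n‖ = 1) {f : E → ℝ≥0∞} (hf : Measurable f) :
    ∫⁻ x, (f x + f (hyperplaneReflection n c x)) = 2 * ∫⁻ x, f x := by
  rw [lintegral_add_left hf, lintegral_comp_reflection hn hf, two_mul]

lemma lintegral_apply_polarize (hn : ‖n‖ = 1) {φ : ℝ → ℝ≥0∞} (hφ : Measurable φ) {v : E → ℝ}
    (hv : Measurable v) (hPv : Measurable (polarize n c v)) :
    ∫⁻ x, φ (polarize n c v x) = ∫⁻ x, φ (v x) := by
  have h : 2 * ∫⁻ x, φ (polarize n c v x) = 2 * ∫⁻ x, φ (v x) := by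
    rw [← lintegral_add_reflection (c := c) (f := fun x ↦ φ (polarize n c v x)) hn (hφ.comp hPv),
      ← lintegral_add_reflection (c := c) (f := fun x ↦ φ (v x)) hn (hφ.comp hv)]
    exact lintegral_congr fun x ↦ apply_polarize_add hn φ v x
  exact (ENNReal.mul_right_inj two_ne_zero ENNReal.ofNat_ne_top).1 h

lemma lintegral_reflectionSum (hn : ‖n‖ = 1) {f : E → E → ℝ≥0∞}
    (hf : Measurable (Function.uncurry f)) :
    ∫⁻ x, ∫⁻ y, reflectionSum n c f x y = 4 * ∫⁻ x, ∫⁻ y, f x y := by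
  have hσ : Measurable (hyperplaneReflection n c) := continuous_hyperplaneReflection.measurable
  have hfx : ∀ x, Measurable (f x) := fun x ↦ hf.of_uncurry_left
  have h : ∀ x, ∫⁻ y, reflectionSum n c f x y =
      2 * ((∫⁻ y, f x y) + ∫⁻ y, f (hyperplaneReflection n c x) y) := by
    intro x
    have h₁ : ∀ y, reflectionSum n c f x y =
        (f x y + f x (hyperplaneReflection n c y)) +
          (f (hyperplaneReflection n c x) y +
            f (hyperplaneReflection n c x) (hyperplaneReflection n c y)) := fun y ↦ by
      unfold reflectionSum; ring
    simp_rw [h₁]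
    rw [lintegral_add_left (by fun_prop), lintegral_add_reflection hn (hfx x),
      lintegral_add_reflection hn (hfx _), mul_add]
  simp_rw [h]
  rw [lintegral_const_mul' _ _ ENNReal.ofNat_ne_top,
    lintegral_add_reflection (f := fun x ↦ ∫⁻ y, f x y) hn hf.lintegral_prod_right', ← mul_assoc]
  norm_num

/-- The energy of `v` for the interaction `J` truncated at distance `ρ`. -/
noncomputable def truncEnergy (ρ : ℝ) (J : ℝ → ℝ) (v : E → ℝ) : ℝ≥0∞ :=
  ∫⁻ x, ∫⁻ y, truncInteraction ρ J v x y

lemma measurable_truncInteraction {F : Type*} [NormedAddCommGroup F] [MeasurableSpace F]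
    [BorelSpace F] [SecondCountableTopology F] (ρ : ℝ) {J : ℝ → ℝ} (hJ : Continuous J)
    {v : F → ℝ} (hv : Continuous v) :
    Measurable (Function.uncurry (truncInteraction ρ J v)) := by
  refine Measurable.ite (measurableSet_lt (by fun_prop) measurable_const) ?_ measurable_const
  fun_prop

lemma truncEnergy_polarize_le (hn : ‖n‖ = 1) {ρ : ℝ} {J : ℝ → ℝ} (hJc : Continuous J)
    (hJ : ConvexOn ℝ univ J) (hJ0 : ∀ a, 0 ≤ J a) {v : E → ℝ} (hv : Continuous v)
    (hPv : Continuous (polarize n c v)) :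
    truncEnergy ρ J (polarize n c v) ≤ truncEnergy ρ J v := by
  have h : 4 * truncEnergy ρ J (polarize n c v) ≤ 4 * truncEnergy ρ J v := by
    unfold truncEnergy
    rw [← lintegral_reflectionSum (c := c) hn (measurable_truncInteraction ρ hJc hPv),
      ← lintegral_reflectionSum (c := c) hn (measurable_truncInteraction ρ hJc hv)]
    exact lintegral_mono fun x ↦ lintegral_mono fun y ↦
      reflectionSum_truncInteraction_polarize_le hn hJ hJ0 v x y
  exact (ENNReal.mul_le_mul_iff_right (by norm_num) ENNReal.ofNat_ne_top).1 h

lemma truncEnergy_le_liminf {ρ : ℝ} {J : ℝ → ℝ} (hJ : Continuous J) {v : E → ℝ}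
    {f : ℕ → E → ℝ} (hf : ∀ k, Continuous (f k))
    (h : ∀ x, Tendsto (fun k ↦ f k x) atTop (𝓝 (v x))) :
    truncEnergy ρ J v ≤ liminf (fun k ↦ truncEnergy ρ J (f k)) atTop := by
  have hm := fun k ↦ measurable_truncInteraction ρ hJ (hf k)
  unfold truncEnergy
  calc ∫⁻ x, ∫⁻ y, truncInteraction ρ J v x y
    _ = ∫⁻ x, ∫⁻ y, liminf (fun k ↦ truncInteraction ρ J (f k) x y) atTop := by
        refine lintegral_congr fun x ↦ lintegral_congr fun y ↦ (Tendsto.liminf_eq ?_).symm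
        unfold truncInteraction
        split_ifs
        · exact ENNReal.tendsto_ofReal ((hJ.tendsto _).comp ((h x).sub (h y)))
        · exact tendsto_const_nhds
    _ ≤ ∫⁻ x, liminf (fun k ↦ ∫⁻ y, truncInteraction ρ J (f k) x y) atTop :=
        lintegral_mono fun x ↦ lintegral_liminf_le fun k ↦ (hm k).of_uncurry_left
    _ ≤ _ := lintegral_liminf_le fun k ↦ (hm k).lintegral_prod_right'

/-- The functions obtained from `u` by rearrangements which do not increase the truncated energy,
with bounds on the values, the support and the Lipschitz constant. -/
structure IsCompetitor (ρ : ℝ) (J : ℝ → ℝ) (K : NNReal) (M R : ℝ) (u v : E → ℝ) : Prop where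
  lipschitz : LipschitzWith K v
  mem_Icc : ∀ x, v x ∈ Icc 0 M
  eq_zero : ∀ x, R < ‖x‖ → v x = 0
  lintegral_eq : ∀ φ : ℝ → ℝ, Continuous φ → φ 0 = 0 →
    ∫⁻ x, ENNReal.ofReal (φ (v x)) = ∫⁻ x, ENNReal.ofReal (φ (u x))
  energy_le : truncEnergy ρ J v ≤ truncEnergy ρ J u

variable {ρ : ℝ} {J : ℝ → ℝ} {K : NNReal} {M R : ℝ} {u v : E → ℝ}

lemma IsCompetitor.polarize (hn : ‖n‖ = 1) (hc : c ≤ 0) (hJc : Continuous J)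
    (hJ : ConvexOn ℝ univ J) (hJ0 : ∀ a, 0 ≤ J a) (hv : IsCompetitor ρ J K M R u v) :
    IsCompetitor ρ J K M R u (polarize n c v) where
  lipschitz := lipschitzWith_polarize hn hv.lipschitz
  mem_Icc := polarize_mem_Icc hv.mem_Icc
  eq_zero _ := polarize_eq_zero hn hc (fun x ↦ (hv.mem_Icc x).1) hv.eq_zero
  lintegral_eq φ hφ hφ0 := by
    rw [← hv.lintegral_eq φ hφ hφ0]
    exact lintegral_apply_polarize (φ := fun a ↦ ENNReal.ofReal (φ a)) hn (by fun_prop)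
      hv.lipschitz.continuous.measurable
      (lipschitzWith_polarize hn hv.lipschitz).continuous.measurable
  energy_le := (truncEnergy_polarize_le hn hJc hJ hJ0 hv.lipschitz.continuous
    (lipschitzWith_polarize hn hv.lipschitz).continuous).trans hv.energy_le

lemma IsCompetitor.of_tendsto (hJ : Continuous J) {f : ℕ → E → ℝ}
    (hf : ∀ k, IsCompetitor ρ J K M R u (f k))
    (h : ∀ x, Tendsto (fun k ↦ f k x) atTop (𝓝 (v x))) :
    IsCompetitor ρ J K M R u v where
  lipschitz := LipschitzWith.of_dist_le_mul fun x y ↦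
    le_of_tendsto ((h x).dist (h y)) (Eventually.of_forall fun k ↦ (hf k).lipschitz.dist_le_mul x y)
  mem_Icc x := isClosed_Icc.mem_of_tendsto (h x) (Eventually.of_forall fun k ↦ (hf k).mem_Icc x)
  eq_zero x hx := tendsto_nhds_unique (h x) (by simp [fun k ↦ (hf k).eq_zero x hx])
  lintegral_eq φ hφ hφ0 := by
    obtain ⟨B, hB⟩ := (isCompact_Icc (a := (0 : ℝ)) (b := M)).exists_bound_of_continuousOn
      hφ.continuousOn
    have : Tendsto (fun k ↦ ∫⁻ x, ENNReal.ofReal (φ (f k x))) atTop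
        (𝓝 (∫⁻ x, ENNReal.ofReal (φ (v x)))) := by
      refine tendsto_lintegral_of_dominated_convergence
        ((closedBall (0 : E) R).indicator fun _ ↦ ENNReal.ofReal B) (fun k ↦ ?_) (fun k ↦ ?_) ?_ ?_
      · have := (hf k).lipschitz.continuous
        fun_prop
      · refine Eventually.of_forall fun x ↦ ?_
        by_cases hx : x ∈ closedBall (0 : E) R
        · rw [indicator_of_mem hx]
          exact ENNReal.ofReal_le_ofReal ((le_abs_self _).trans (hB _ ((hf k).mem_Icc x)))
        · rw [mem_closedBall_zero_iff, not_le] at hx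
          simp [(hf k).eq_zero x hx, hφ0]
      · rw [lintegral_indicator measurableSet_closedBall, setLIntegral_const]
        exact ENNReal.mul_ne_top ENNReal.ofReal_ne_top measure_closedBall_lt_top.ne
      · exact Eventually.of_forall fun x ↦
          ENNReal.tendsto_ofReal ((hφ.tendsto _).comp (h x))
    exact tendsto_nhds_unique this (by simp [fun k ↦ (hf k).lintegral_eq φ hφ hφ0])
  energy_le := (truncEnergy_le_liminf hJ (fun k ↦ (hf k).lipschitz.continuous) h).trans <|
    (liminf_le_liminf (Eventually.of_forall fun k ↦ (hf k).energy_le)).trans (by simp)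

/-- Bounded sequences of uniformly Lipschitz functions have pointwise convergent subsequences. -/
lemma exists_subseq_tendsto_of_lipschitzWith {F : Type*} [NormedAddCommGroup F]
    [NormedSpace ℝ F] [FiniteDimensional ℝ F] {K : NNReal} {M : ℝ} {f : ℕ → F → ℝ} (hf : ∀ k, LipschitzWith K (f k))
    (hM : ∀ k x, f k x ∈ Icc 0 M) :
    ∃ (v : F → ℝ) (θ : ℕ → ℕ), StrictMono θ ∧
      ∀ x, Tendsto (fun k ↦ f (θ k) x) atTop (𝓝 (v x)) := by
  set S : Set C(F, ℝ) := {φ | LipschitzWith K φ ∧ ∀ x, φ x ∈ Icc 0 M} with hS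
  have hcomp : IsCompact S := by
    refine ArzelaAscoli.isCompact_of_equicontinuous S ?_ ?_
    · have himage : ContinuousMap.toFun '' S =
          (univ.pi fun _ ↦ Icc 0 M) ∩ ⋂ (x : F) (y : F), {φ | dist (φ x) (φ y) ≤ K * dist x y} := by
        ext φ
        simp only [mem_image, mem_inter_iff, Set.mem_pi, mem_iInter, Set.mem_ofPred_eq, hS]
        constructor
        · rintro ⟨φ, ⟨h₁, h₂⟩, rfl⟩
          exact ⟨fun x _ ↦ h₂ x, fun x y ↦ h₁.dist_le_mul x y⟩
        · rintro ⟨h₁, h₂⟩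
          have := LipschitzWith.of_dist_le_mul h₂
          exact ⟨⟨φ, this.continuous⟩, ⟨this, fun x ↦ h₁ x trivial⟩, rfl⟩
      rw [himage]
      refine (isCompact_univ_pi fun _ ↦ isCompact_Icc).inter_right ?_
      refine isClosed_iInter fun x ↦ isClosed_iInter fun y ↦ isClosed_le ?_ continuous_const
      exact (continuous_apply x).dist (continuous_apply y)
    · exact (LipschitzWith.uniformEquicontinuous _ K fun φ ↦ φ.2.1).equicontinuous
  obtain ⟨v, -, θ, hθ, h⟩ := hcomp.tendsto_subseq (x := fun k ↦ ⟨f k, (hf k).continuous⟩)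
    fun k ↦ ⟨hf k, hM k⟩
  exact ⟨v, θ, hθ, fun x ↦ ((ContinuousEvalConst.continuous_eval_const x).tendsto v).comp h⟩

lemma IsCompetitor.hasCompactSupport (hv : IsCompetitor ρ J K M R u v) : HasCompactSupport v :=
  HasCompactSupport.intro (isCompact_closedBall (0 : E) R) fun x hx ↦
    hv.eq_zero x (by simpa using hx)

lemma IsCompetitor.integrable_mul_exp (hv : IsCompetitor ρ J K M R u v) :
    Integrable fun x ↦ v x * Real.exp (-‖x‖) :=
  (hv.lipschitz.continuous.mul (by fun_prop)).integrable_of_hasCompactSupport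
    hv.hasCompactSupport.mul_right

lemma IsCompetitor.norm_mul_exp_le (hv : IsCompetitor ρ J K M R u v) (x : E) :
    ‖v x * Real.exp (-‖x‖)‖ ≤ (closedBall (0 : E) R).indicator (fun _ ↦ M) x := by
  by_cases hx : x ∈ closedBall (0 : E) R
  · rw [indicator_of_mem hx, norm_mul, Real.norm_of_nonneg (hv.mem_Icc x).1,
      Real.norm_of_nonneg (Real.exp_pos _).le]
    have : Real.exp (-‖x‖) ≤ 1 := Real.exp_le_one_iff.2 (by simp)
    nlinarith [(hv.mem_Icc x).1, (hv.mem_Icc x).2, Real.exp_pos (-‖x‖)]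
  · rw [indicator_of_notMem hx]
    rw [mem_closedBall_zero_iff, not_le] at hx
    simp [hv.eq_zero x hx]

lemma integrable_indicator_closedBall_const (M R : ℝ) :
    Integrable ((closedBall (0 : E) R).indicator (fun _ ↦ M)) :=
  (integrable_indicator_iff measurableSet_closedBall).2
    (integrableOn_const measure_closedBall_lt_top.ne)

lemma exists_isCompetitor_forall_integral_le (hJ : Continuous J)
    (hu : IsCompetitor ρ J K M R u u) :
    ∃ v, IsCompetitor ρ J K M R u v ∧ ∀ v', IsCompetitor ρ J K M R u v' →
      ∫ x, v' x * Real.exp (-‖x‖) ≤ ∫ x, v x * Real.exp (-‖x‖) := by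
  set T : Set ℝ := (fun v : E → ℝ ↦ ∫ x, v x * Real.exp (-‖x‖)) '' {v | IsCompetitor ρ J K M R u v}
  have hTne : T.Nonempty := ⟨_, u, hu, rfl⟩
  have hTb : BddAbove T := by
    refine ⟨∫ x, (closedBall (0 : E) R).indicator (fun _ ↦ M) x, ?_⟩
    rintro _ ⟨v, hv, rfl⟩
    exact integral_mono hv.integrable_mul_exp (integrable_indicator_closedBall_const M R)
      fun x ↦ (le_abs_self _).trans (hv.norm_mul_exp_le x)
  obtain ⟨a, -, ha, haT⟩ := exists_seq_tendsto_sSup hTne hTb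
  choose f hf hfa using haT
  obtain ⟨v, θ, hθ, hv⟩ := exists_subseq_tendsto_of_lipschitzWith (fun k ↦ (hf k).lipschitz)
    fun k ↦ (hf k).mem_Icc
  have hvc : IsCompetitor ρ J K M R u v := .of_tendsto hJ (fun k ↦ hf (θ k)) hv
  have hlim : Tendsto (fun k ↦ a (θ k)) atTop (𝓝 (∫ x, v x * Real.exp (-‖x‖))) := by
    simp_rw [← hfa]
    exact tendsto_integral_of_dominated_convergence _
      (fun k ↦ (hf (θ k)).integrable_mul_exp.aestronglyMeasurable)
      (integrable_indicator_closedBall_const M R)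
      (fun k ↦ Eventually.of_forall (hf (θ k)).norm_mul_exp_le)
      (Eventually.of_forall fun x ↦ (hv x).mul_const _)
  refine ⟨v, hvc, fun v' hv' ↦ ?_⟩
  rw [tendsto_nhds_unique hlim (ha.comp hθ.tendsto_atTop)]
  exact le_csSup hTb ⟨v', hv', rfl⟩

/-- A competitor maximizing the pairing with a radially decreasing weight is radially
decreasing. -/
lemma IsCompetitor.le_of_norm_lt (hJc : Continuous J) (hJ : ConvexOn ℝ univ J)
    (hJ0 : ∀ a, 0 ≤ J a) (hv : IsCompetitor ρ J K M R u v)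
    (hmax : ∀ v', IsCompetitor ρ J K M R u v' →
      ∫ x, v' x * Real.exp (-‖x‖) ≤ ∫ x, v x * Real.exp (-‖x‖)) {p q : E} (hpq : ‖p‖ < ‖q‖) :
    v q ≤ v p := by
  by_contra! hlt
  obtain ⟨n, c, hn, hc, hp, hq⟩ := exists_hyperplaneReflection_eq hpq
  have hPv := hv.polarize hn hc hJc hJ hJ0
  set D : E → ℝ := fun x ↦ _root_.polarize n c v x * Real.exp (-‖x‖) - v x * Real.exp (-‖x‖)
    with hD
  have hDint : Integrable D := hPv.integrable_mul_exp.sub hv.integrable_mul_exp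
  have hDcont : Continuous D := by
    have := hv.lipschitz.continuous
    have := hPv.lipschitz.continuous
    fun_prop
  have hDsupp : HasCompactSupport D :=
    hPv.hasCompactSupport.mul_right.sub hv.hasCompactSupport.mul_right
  have hle : ∫ x, D x ≤ 0 := by
    rw [hD, integral_sub hPv.integrable_mul_exp hv.integrable_mul_exp]
    linarith [hmax _ hPv]
  have hmp := measurePreserving_hyperplaneReflection (c := c) hn
  have hemb : Topology.IsClosedEmbedding (hyperplaneReflection n c) :=
    (Isometry.of_dist_eq (dist_reflection_reflection hn)).isClosedEmbedding
  have hDrefl : ∫ x, D (hyperplaneReflection n c x) = ∫ x, D x :=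
    hmp.integral_comp hemb.measurableEmbedding D
  have hpos : 0 < ∫ x, (D x + D (hyperplaneReflection n c x)) := by
    refine Continuous.integral_pos_of_hasCompactSupport_nonneg_nonzero (x := p)
      (hDcont.add (hDcont.comp continuous_hyperplaneReflection))
      (hDsupp.add (hDsupp.comp_isClosedEmbedding hemb)) (fun x ↦ ?_) (ne_of_gt ?_)
    · have := le_polarize_mul_add (w := fun x ↦ Real.exp (-‖x‖)) hn hc
        (fun x y h ↦ Real.exp_le_exp.2 (neg_le_neg h)) v x
      simp only [hD, Pi.zero_apply]
      linarith
    · have hw : Real.exp (-‖q‖) < Real.exp (-‖p‖) := Real.exp_lt_exp.2 (neg_lt_neg hpq)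
      simp only [hD]
      rw [polarize_of_nonneg hp.le, polarize_reflection_of_nonneg hn hp.le, hq,
        max_eq_right hlt.le, min_eq_left hlt.le]
      nlinarith
  have hDσ : Integrable fun x ↦ D (hyperplaneReflection n c x) :=
    hmp.integrable_comp_of_integrable hDint
  rw [integral_add hDint hDσ, hDrefl] at hpos
  linarith

lemma volume_lt_eq_of_lintegral_eq (hu : Continuous u) (hv : Continuous v)
    (h : ∀ φ : ℝ → ℝ, Continuous φ → φ 0 = 0 →
      ∫⁻ x, ENNReal.ofReal (φ (v x)) = ∫⁻ x, ENNReal.ofReal (φ (u x))) {t : ℝ} (ht : 0 < t) :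
    volume {x | t < v x} = volume {x | t < u x} := by
  set φ : ℕ → ℝ → ℝ := fun k a ↦ min 1 (k * max (a - t) 0) with hφ
  have hφc : ∀ k, Continuous (φ k) := fun k ↦ by fun_prop
  have key : ∀ f : E → ℝ, Continuous f →
      Tendsto (fun k ↦ ∫⁻ x, ENNReal.ofReal (φ k (f x))) atTop (𝓝 (volume {x | t < f x})) := by
    intro f hf
    have hms : MeasurableSet {x | t < f x} := measurableSet_lt measurable_const hf.measurable
    rw [← lintegral_indicator_one hms]
    refine lintegral_tendsto_of_tendsto_of_monotone (fun k ↦ ?_) ?_ ?_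
    · have := hφc k
      fun_prop
    · refine Eventually.of_forall fun x k l hkl ↦ ENNReal.ofReal_le_ofReal ?_
      simp only [hφ]
      gcongr
    · refine Eventually.of_forall fun x ↦ ?_
      by_cases hx : t < f x
      · rw [indicator_of_mem (show x ∈ {x | t < f x} from hx), Pi.one_apply]
        refine tendsto_const_nhds.congr' ?_
        obtain ⟨m, hm⟩ := exists_nat_gt (1 / (f x - t))
        filter_upwards [eventually_ge_atTop m] with k hk
        have hk' : (m : ℝ) ≤ k := by exact_mod_cast hk
        have hpos : 0 < f x - t := sub_pos.2 hx
        have : 1 ≤ k * (f x - t) := by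
          rw [div_lt_iff₀ hpos] at hm
          nlinarith
        simp only [hφ]
        rw [max_eq_left hpos.le, min_eq_left this, ENNReal.ofReal_one]
      · rw [indicator_of_notMem (show x ∉ {x | t < f x} from hx)]
        have : f x - t ≤ 0 := by linarith [not_lt.1 hx]
        simp [hφ, max_eq_right this]
  refine tendsto_nhds_unique (key v hv) ?_
  simpa only [fun k ↦ h (φ k) (hφc k) (by simp [hφ, ht.le])] using key u hu

end PolarizationMeasure

section Rearrangement

variable {N : ℕ}

lemma volume_ball_eq_ballVol_mul (hN : 1 ≤ N) {r : ℝ} (hr : 0 ≤ r) :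
    volume (ball (0 : EuclideanSpace ℝ (Fin N)) r) = ballVol N * ENNReal.ofReal (r ^ N) := by
  have : NeZero N := ⟨by lia⟩
  rw [Measure.addHaar_ball _ _ hr, finrank_euclideanSpace_fin, mul_comm, ballVol]

lemma volume_closedBall_eq_ballVol_mul {r : ℝ} (hr : 0 ≤ r) :
    volume (closedBall (0 : EuclideanSpace ℝ (Fin N)) r) = ballVol N * ENNReal.ofReal (r ^ N) := by
  rw [Measure.addHaar_closedBall _ _ hr, finrank_euclideanSpace_fin, mul_comm, ballVol]

/-- A continuous nonnegative radially decreasing function is its own rearrangement. -/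
lemma rearrangeFun_eq_self (hN : 1 ≤ N) {v : EuclideanSpace ℝ (Fin N) → ℝ} (hv : Continuous v)
    (hv0 : ∀ x, 0 ≤ v x) (hrad : ∀ p q, ‖p‖ < ‖q‖ → v q ≤ v p) : rearrangeFun v = v := by
  have : NeZero N := ⟨by lia⟩
  ext x
  have hset : {t : ℝ | 0 < t ∧ ballVol N * ENNReal.ofReal (‖x‖ ^ N) < volume {y | t < v y}} =
      Ioo 0 (v x) := by
    ext t
    refine and_congr_right fun _ ↦ ⟨fun h ↦ ?_, fun h ↦ ?_⟩
    · by_contra! hle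
      refine h.not_ge ?_
      rw [← volume_closedBall_eq_ballVol_mul (norm_nonneg x)]
      refine measure_mono fun y hy ↦ mem_closedBall_zero_iff.2 ?_
      by_contra! hxy
      exact absurd (hrad x y hxy) (not_le.2 (hle.trans_lt hy))
    · have hopen : IsOpen {y | t < v y} := isOpen_lt continuous_const hv
      have hx : x ∈ closure (closedBall 0 ‖x‖)ᶜ := by
        rw [closure_compl, interior_closedBall']
        simp
      obtain ⟨y, hyt, hy⟩ := mem_closure_iff.1 hx _ hopen h
      rw [mem_compl_iff, mem_closedBall_zero_iff, not_le] at hy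
      calc ballVol N * ENNReal.ofReal (‖x‖ ^ N)
        _ < ballVol N * ENNReal.ofReal (‖y‖ ^ N) := by
            refine ENNReal.mul_lt_mul_right (measure_ball_pos volume _ one_pos).ne'
              measure_ball_lt_top.ne ?_
            have := norm_nonneg x
            exact (ENNReal.ofReal_lt_ofReal_iff (pow_pos (this.trans_lt hy) N)).2
              (pow_lt_pow_left₀ hy this (by lia))
        _ = volume (ball 0 ‖y‖) := (volume_ball_eq_ballVol_mul hN (norm_nonneg y)).symm
        _ ≤ _ := measure_mono fun z hz ↦
            lt_of_lt_of_le hyt (hrad z y (mem_ball_zero_iff.1 hz))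
  rw [rearrangeFun, hset]
  rcases (hv0 x).eq_or_lt with h | h
  · rw [← h]; simp
  · exact csSup_Ioo h

/-- The symmetric decreasing rearrangement does not increase truncated convex energies. -/
theorem truncEnergy_rearrangeFun_le (hN : 1 ≤ N) {ρ : ℝ} {J : ℝ → ℝ} (hJ : ConvexOn ℝ univ J)
    (hJ0 : ∀ a, 0 ≤ J a) {u : EuclideanSpace ℝ (Fin N) → ℝ} {K : NNReal} (hu : LipschitzWith K u)
    (hsupp : HasCompactSupport u) (hu0 : ∀ x, 0 ≤ u x) :
    Continuous (rearrangeFun u) ∧ truncEnergy ρ J (rearrangeFun u) ≤ truncEnergy ρ J u := by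
  have hJc : Continuous J := continuousOn_univ.1 (hJ.continuousOn isOpen_univ)
  obtain ⟨M, hM⟩ := hsupp.exists_bound_of_continuous hu.continuous
  obtain ⟨R, hR⟩ := hsupp.isBounded.subset_closedBall (0 : EuclideanSpace ℝ (Fin N))
  have huc : IsCompetitor ρ J K M R u u :=
    { lipschitz := hu
      mem_Icc := fun x ↦ ⟨hu0 x, (le_abs_self _).trans (hM x)⟩
      eq_zero := fun x hx ↦ image_eq_zero_of_notMem_tsupport fun h ↦
        hx.not_ge (mem_closedBall_zero_iff.1 (hR h))
      lintegral_eq := fun _ _ _ ↦ rfl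
      energy_le := le_rfl }
  obtain ⟨v, hv, hmax⟩ := exists_isCompetitor_forall_integral_le hJc huc
  have hvol : rearrangeFun u = rearrangeFun v := by
    ext x
    unfold rearrangeFun
    congr 1
    ext t
    refine and_congr_right fun ht ↦ ?_
    rw [volume_lt_eq_of_lintegral_eq hu.continuous hv.lipschitz.continuous hv.lintegral_eq ht]
  have hvv : rearrangeFun v = v := rearrangeFun_eq_self hN hv.lipschitz.continuous
    (fun x ↦ (hv.mem_Icc x).1) fun p q hpq ↦ hv.le_of_norm_lt hJc hJ hJ0 hmax hpq
  rw [hvol, hvv]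
  exact ⟨hv.lipschitz.continuous, hv.energy_le⟩

end Rearrangement

section Young

variable {G g : ℝ → ℝ}

lemma IsYoungPair.intervalIntegrable (hY : IsYoungPair G g) {a b : ℝ} (ha : 0 ≤ a) (hb : 0 ≤ b) :
    IntervalIntegrable g volume a b :=
  (hY.g_mono.mono fun _ hx ↦ (le_min ha hb).trans hx.1).intervalIntegrable

lemma IsYoungPair.g_nonneg (hY : IsYoungPair G g) {t : ℝ} (ht : 0 ≤ t) : 0 ≤ g t := by
  rw [← hY.g_zero]
  exact hY.g_mono self_mem_Ici ht ht

lemma IsYoungPair.sub_eq (hY : IsYoungPair G g) {a b : ℝ} (ha : 0 ≤ a) (hb : 0 ≤ b) :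
    G b - G a = ∫ τ in a..b, g τ := by
  rw [hY.G_eq a ha, hY.G_eq b hb, intervalIntegral.integral_interval_sub_left]
  exacts [hY.intervalIntegrable le_rfl hb, hY.intervalIntegrable le_rfl ha]

lemma IsYoungPair.mul_le_sub (hY : IsYoungPair G g) {a b : ℝ} (ha : 0 ≤ a) (hab : a ≤ b) :
    (b - a) * g a ≤ G b - G a := by
  rw [hY.sub_eq ha (ha.trans hab)]
  have := intervalIntegral.integral_mono_on hab (intervalIntegrable_const (c := g a))
    (hY.intervalIntegrable ha (ha.trans hab))
    fun x hx ↦ hY.g_mono ha (ha.trans hx.1) hx.1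
  simpa using this

lemma IsYoungPair.sub_le_mul (hY : IsYoungPair G g) {a b : ℝ} (ha : 0 ≤ a) (hab : a ≤ b) :
    G b - G a ≤ (b - a) * g b := by
  rw [hY.sub_eq ha (ha.trans hab)]
  have := intervalIntegral.integral_mono_on hab (hY.intervalIntegrable ha (ha.trans hab))
    (intervalIntegrable_const (c := g b))
    fun x hx ↦ hY.g_mono (ha.trans hx.1) (ha.trans hab) hx.2
  simpa using this

lemma IsYoungPair.G_zero (hY : IsYoungPair G g) : G 0 = 0 := by
  rw [hY.G_eq 0 le_rfl, intervalIntegral.integral_same]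

lemma IsYoungPair.G_le (hY : IsYoungPair G g) {a b : ℝ} (ha : 0 ≤ a) (hab : a ≤ b) :
    G a ≤ G b := by
  nlinarith [hY.mul_le_sub ha hab, mul_nonneg (sub_nonneg.2 hab) (hY.g_nonneg ha)]

lemma IsYoungPair.G_nonneg (hY : IsYoungPair G g) {a : ℝ} (ha : 0 ≤ a) : 0 ≤ G a := by
  rw [← hY.G_zero]
  exact hY.G_le le_rfl ha

lemma IsYoungPair.convexOn (hY : IsYoungPair G g) : ConvexOn ℝ (Ici 0) G := by
  refine convexOn_of_slope_mono_adjacent (convex_Ici 0) fun {x y z} hx hz hxy hyz ↦ ?_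
  have hx : 0 ≤ x := hx
  have h₁ := hY.sub_le_mul hx hxy.le
  have h₂ := hY.mul_le_sub (hx.trans hxy.le) hyz.le
  calc (G y - G x) / (y - x) ≤ g y := by
        rw [div_le_iff₀ (sub_pos.2 hxy)]; linarith
    _ ≤ (G z - G y) / (z - y) := by
        rw [le_div_iff₀ (sub_pos.2 hyz)]; linarith

lemma IsYoungPair.convexOn_abs_div (hY : IsYoungPair G g) (c : ℝ) :
    ConvexOn ℝ univ fun a ↦ G |a / c| := by
  refine ⟨convex_univ, fun x _ y _ α β hα hβ hαβ ↦ ?_⟩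
  refine le_trans (hY.G_le (abs_nonneg _) ?_)
    (hY.convexOn.2 (abs_nonneg (x / c)) (abs_nonneg (y / c)) hα hβ hαβ)
  simp only [smul_eq_mul, add_div, mul_div_assoc]
  refine (abs_add_le _ _).trans_eq ?_
  rw [abs_mul, abs_mul, abs_of_nonneg hα, abs_of_nonneg hβ]

lemma IsYoungPair.continuous_abs (hY : IsYoungPair G g) : Continuous fun a ↦ G |a| := by
  have := hY.convexOn_abs_div 1
  simp only [div_one] at this
  exact continuousOn_univ.1 (this.continuousOn isOpen_univ)

lemma IsYoungPair.hasDerivWithinAt (hY : IsYoungPair G g) {t : ℝ} (ht : 0 ≤ t) :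
    HasDerivWithinAt G (g t) (Ici t) t := by
  have h : HasDerivWithinAt (fun b ↦ ∫ τ in (0 : ℝ)..b, g τ) (g t) (Ici t) t := by
    refine intervalIntegral.integral_hasDerivWithinAt_right (t := Ioi t)
      (hY.intervalIntegrable le_rfl ht) ?_ ((hY.g_rightCont t ht).mono Ioi_subset_Ici_self)
    refine ⟨Ioi t, self_mem_nhdsWithin, ?_⟩
    exact (aemeasurable_restrict_of_monotoneOn measurableSet_Ioi (hY.g_mono.mono
      fun x hx ↦ ht.trans (le_of_lt hx))).aestronglyMeasurable
  exact h.congr (fun x hx ↦ hY.G_eq x (ht.trans hx)) (hY.G_eq t ht)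

lemma IsYoungPair.hasDerivWithinAt_mul_rpow (hY : IsYoungPair G g) (p : ℝ) {t : ℝ} (ht : 0 < t) :
    HasDerivWithinAt (fun t ↦ G t * t ^ (-p)) (t ^ (-p - 1) * (t * g t - p * G t)) (Ici t) t := by
  have h := (hY.hasDerivWithinAt ht.le).mul
    (Real.hasDerivAt_rpow_const (p := -p) (Or.inl ht.ne')).hasDerivWithinAt
  refine h.congr_deriv ?_
  rw [Real.rpow_sub_one ht.ne']
  field_simp
  ring

lemma IsYoungPair.continuousOn_mul_rpow (hY : IsYoungPair G g) (p : ℝ) {a b : ℝ} (ha : 0 < a) :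
    ContinuousOn (fun t ↦ G t * t ^ (-p)) (Icc a b) := by
  refine ContinuousOn.mul ?_ ?_
  · refine hY.continuous_abs.continuousOn.congr fun x hx ↦ ?_
    simp only [abs_of_pos (ha.trans_le hx.1)]
  · exact continuousOn_id.rpow_const fun x hx ↦ Or.inl (ha.trans_le hx.1).ne'

lemma IsYoungPair.le_mul_rpow_of_lower (hY : IsYoungPair G g) {p : ℝ}
    (hp : ∀ t > 0, p * G t ≤ t * g t) {a b : ℝ} (ha : 0 < a) (hab : a ≤ b) :
    G a ≤ G b * (a / b) ^ p := by
  have h : G a * a ^ (-p) ≤ G b * b ^ (-p) :=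
    image_le_of_deriv_right_le_deriv_boundary (f := fun _ ↦ G a * a ^ (-p)) (f' := fun _ ↦ 0)
      (B := fun t ↦ G t * t ^ (-p)) (a := a)
      continuousOn_const (fun x _ ↦ hasDerivWithinAt_const _ _ _) le_rfl
      (hY.continuousOn_mul_rpow p ha)
      (fun x hx ↦ hY.hasDerivWithinAt_mul_rpow p (ha.trans_le hx.1))
      (fun x hx ↦ mul_nonneg (Real.rpow_nonneg (ha.le.trans hx.1) _)
        (sub_nonneg.2 (hp x (ha.trans_le hx.1)))) (right_mem_Icc.2 hab)
  have hb := ha.trans_le hab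
  rw [Real.rpow_neg ha.le, Real.rpow_neg hb.le, ← div_eq_mul_inv,
    div_le_iff₀ (Real.rpow_pos_of_pos ha p)] at h
  rw [Real.div_rpow ha.le hb.le]
  refine h.trans_eq ?_
  ring

lemma IsYoungPair.le_mul_rpow_of_upper (hY : IsYoungPair G g) {p : ℝ}
    (hp : ∀ t > 0, t * g t ≤ p * G t) {a b : ℝ} (ha : 0 < a) (hab : a ≤ b) :
    G b ≤ G a * (b / a) ^ p := by
  have h : G b * b ^ (-p) ≤ G a * a ^ (-p) :=
    image_le_of_deriv_right_le_deriv_boundary (B := fun _ ↦ G a * a ^ (-p)) (B' := fun _ ↦ 0)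
      (hY.continuousOn_mul_rpow p ha)
      (fun x hx ↦ hY.hasDerivWithinAt_mul_rpow p (ha.trans_le hx.1)) le_rfl
      continuousOn_const (fun x _ ↦ hasDerivWithinAt_const _ _ _)
      (fun x hx ↦ mul_nonpos_of_nonneg_of_nonpos (Real.rpow_nonneg (ha.le.trans hx.1) _)
        (sub_nonpos.2 (hp x (ha.trans_le hx.1)))) (right_mem_Icc.2 hab)
  have hb := ha.trans_le hab
  rw [Real.rpow_neg ha.le, Real.rpow_neg hb.le, ← div_eq_mul_inv,
    div_le_iff₀ (Real.rpow_pos_of_pos hb p)] at h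
  rw [Real.div_rpow hb.le ha.le]
  refine h.trans_eq ?_
  ring

lemma IsYoungPair.div_rpow_le_mul (hY : IsYoungPair G g) {p : ℝ}
    (hp : ∀ t > 0, p * G t ≤ t * g t) {s : ℝ} (hs : 0 ≤ s) {a d r : ℝ} (ha : 0 ≤ a) (hd : 0 < d)
    (hdr : d ≤ r) : G (a / r ^ s) ≤ G (a / d ^ s) * (d / r) ^ (s * p) := by
  have hr := hd.trans_le hdr
  rcases ha.eq_or_lt with rfl | ha
  · simp [hY.G_zero]
  · have hds := Real.rpow_pos_of_pos hd s
    have hrs := Real.rpow_pos_of_pos hr s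
    have h := hY.le_mul_rpow_of_lower hp (div_pos ha hrs)
      (div_le_div_of_nonneg_left ha.le hds (Real.rpow_le_rpow hd.le hdr hs))
    have e : a / r ^ s / (a / d ^ s) = (d / r) ^ s := by
      rw [Real.div_rpow hd.le hr.le]; field_simp
    rwa [e, ← Real.rpow_mul (by positivity)] at h

lemma IsYoungPair.div_rpow_le_two (hY : IsYoungPair G g) {p : ℝ}
    (hp : ∀ t > 0, t * g t ≤ p * G t) {s : ℝ} (hs : 0 ≤ s) {a r : ℝ} (ha : 0 ≤ a) (hr : 0 < r) :
    G (a / r ^ s) ≤ G (a / (2 * r) ^ s) * 2 ^ (s * p) := by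
  rcases ha.eq_or_lt with rfl | ha
  · simp [hY.G_zero]
  · have hrs := Real.rpow_pos_of_pos hr s
    have hrs' := Real.rpow_pos_of_pos (show 0 < 2 * r by positivity) s
    have h := hY.le_mul_rpow_of_upper hp (div_pos ha hrs')
      (div_le_div_of_nonneg_left ha.le hrs (Real.rpow_le_rpow hr.le (by linarith) hs))
    have e : a / r ^ s / (a / (2 * r) ^ s) = 2 ^ s := by
      rw [Real.mul_rpow (by norm_num) hr.le]; field_simp
    rwa [e, ← Real.rpow_mul (by norm_num)] at h

end Young

section LayerCake

variable {G g : ℝ → ℝ} {N : ℕ} {s : ℝ}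

lemma setLIntegral_Ioi_rpow (hN : 1 ≤ N) {r : ℝ} (hr : 0 < r) :
    ∫⁻ ρ in Ioi r, ENNReal.ofReal (ρ ^ (-((N : ℝ) + 1))) =
      ENNReal.ofReal (r ^ (-(N : ℝ)) / N) := by
  have hN' : (1 : ℝ) ≤ N := by exact_mod_cast hN
  have hlt : -((N : ℝ) + 1) < -1 := by linarith
  rw [← ofReal_integral_eq_lintegral_ofReal (integrableOn_Ioi_rpow_of_lt hlt hr),
    integral_Ioi_rpow_of_lt hlt hr]
  · congr 1
    rw [show -((N : ℝ) + 1) + 1 = -N by ring, neg_div_neg_eq]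
  · filter_upwards [ae_restrict_mem measurableSet_Ioi] with ρ hρ
    exact Real.rpow_nonneg (hr.le.trans (le_of_lt hρ)) _

/-- The layer at scale `ρ` in the decomposition of the interaction
`G (|u x - u y| / |x - y|^s) / |x - y|^N` into truncated interactions. -/
noncomputable def interactionLayer (s : ℝ) (G : ℝ → ℝ) (u : EuclideanSpace ℝ (Fin N) → ℝ)
    (ρ : ℝ) (x y : EuclideanSpace ℝ (Fin N)) : ℝ≥0∞ :=
  truncInteraction ρ (fun a ↦ G |a / ρ ^ s|) u x y * ENNReal.ofReal (ρ ^ (-((N : ℝ) + 1)))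

lemma lintegral_interactionLayer_le (hN : 1 ≤ N) (hs : 0 < s) (hY : IsYoungPair G g)
    (u : EuclideanSpace ℝ (Fin N) → ℝ) (x y : EuclideanSpace ℝ (Fin N)) :
    ∫⁻ ρ in Ioi 0, interactionLayer s G u ρ x y ≤
      ENNReal.ofReal (G (|u x - u y| / dist x y ^ s) / dist x y ^ (N : ℝ)) := by
  rcases eq_or_ne x y with rfl | hxy
  · simp [interactionLayer, truncInteraction, hY.G_zero]
  · have hr : 0 < dist x y := dist_pos.2 hxy
    have hG0 : 0 ≤ G (|u x - u y| / dist x y ^ s) := hY.G_nonneg (by positivity)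
    have hN' : (1 : ℝ) ≤ N := by exact_mod_cast hN
    calc ∫⁻ ρ in Ioi 0, interactionLayer s G u ρ x y
      _ ≤ ∫⁻ ρ, (Ioi (dist x y)).indicator
            (fun ρ ↦ ENNReal.ofReal (G (|u x - u y| / dist x y ^ s)) *
              ENNReal.ofReal (ρ ^ (-((N : ℝ) + 1)))) ρ := by
          refine (lintegral_mono fun ρ ↦ ?_).trans (setLIntegral_le_lintegral _ _)
          unfold interactionLayer truncInteraction
          split_ifs with h
          · rw [indicator_of_mem (show ρ ∈ Ioi (dist x y) from h)]
            gcongr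
            beta_reduce
            rw [abs_div, abs_of_pos (Real.rpow_pos_of_pos (hr.trans h) s)]
            refine hY.G_le (div_nonneg (abs_nonneg _) (Real.rpow_nonneg (hr.trans h).le s)) ?_
            gcongr
          · simp
      _ = ENNReal.ofReal (G (|u x - u y| / dist x y ^ s)) *
            ENNReal.ofReal (dist x y ^ (-(N : ℝ)) / N) := by
          rw [lintegral_indicator measurableSet_Ioi,
            lintegral_const_mul' _ _ ENNReal.ofReal_ne_top, setLIntegral_Ioi_rpow hN hr]
      _ ≤ _ := by
          rw [← ENNReal.ofReal_mul hG0]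
          refine ENNReal.ofReal_le_ofReal ?_
          rw [Real.rpow_neg hr.le, div_eq_mul_inv (G _)]
          refine mul_le_mul_of_nonneg_left (div_le_self (by positivity) hN') hG0

lemma le_lintegral_interactionLayer (hs : 0 < s) (hY : IsYoungPair G g) {p : ℝ}
    (hp : ∀ t > 0, t * g t ≤ p * G t)
    (u : EuclideanSpace ℝ (Fin N) → ℝ) (x y : EuclideanSpace ℝ (Fin N)) :
    ENNReal.ofReal (G (|u x - u y| / dist x y ^ s) / dist x y ^ (N : ℝ)) ≤
      ENNReal.ofReal (2 ^ (s * p) * 2 ^ ((N : ℝ) + 1)) *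
        ∫⁻ ρ in Ioi 0, interactionLayer s G u ρ x y := by
  rcases eq_or_ne x y with rfl | hxy
  · simp [hY.G_zero]
  · set r := dist x y with hrdef
    have hr : 0 < r := dist_pos.2 hxy
    have hG0 : 0 ≤ G (|u x - u y| / (2 * r) ^ s) := hY.G_nonneg (by positivity)
    have hlow : ENNReal.ofReal (G (|u x - u y| / (2 * r) ^ s) * (2 * r) ^ (-((N : ℝ) + 1)) * r) ≤
        ∫⁻ ρ in Ioi 0, interactionLayer s G u ρ x y := by
      calc ENNReal.ofReal (G (|u x - u y| / (2 * r) ^ s) * (2 * r) ^ (-((N : ℝ) + 1)) * r)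
        _ = ∫⁻ _ in Ioc r (2 * r),
              ENNReal.ofReal (G (|u x - u y| / (2 * r) ^ s) * (2 * r) ^ (-((N : ℝ) + 1))) := by
            rw [setLIntegral_const, Real.volume_Ioc, ← ENNReal.ofReal_mul (by positivity)]
            ring_nf
        _ ≤ ∫⁻ ρ in Ioc r (2 * r), interactionLayer s G u ρ x y := by
            refine setLIntegral_mono' measurableSet_Ioc fun ρ hρ ↦ ?_
            have hρ0 : 0 < ρ := hr.trans hρ.1
            rw [interactionLayer, truncInteraction, if_pos hρ.1, ENNReal.ofReal_mul hG0]
            refine mul_le_mul' (ENNReal.ofReal_le_ofReal ?_) (ENNReal.ofReal_le_ofReal ?_)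
            · rw [abs_div, abs_of_pos (Real.rpow_pos_of_pos hρ0 s)]
              refine hY.G_le (by positivity) ?_
              have := hρ.2
              gcongr
            · exact Real.rpow_le_rpow_of_nonpos hρ0 hρ.2 (by linarith [N.cast_nonneg (α := ℝ)])
        _ ≤ _ := lintegral_mono_set fun ρ hρ ↦ hr.trans hρ.1
    refine le_trans ?_ (mul_le_mul_right hlow _)
    rw [← ENNReal.ofReal_mul (by positivity)]
    refine ENNReal.ofReal_le_ofReal ?_
    rw [div_le_iff₀ (Real.rpow_pos_of_pos hr _)]
    refine (hY.div_rpow_le_two hp hs.le (abs_nonneg _) hr).trans_eq ?_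
    rw [Real.mul_rpow (by norm_num) hr.le (z := -((N : ℝ) + 1)), Real.rpow_neg (by norm_num),
      Real.rpow_neg hr.le, Real.rpow_add_one hr.ne']
    field_simp

lemma measurable_interactionLayer (hY : IsYoungPair G g) {u : EuclideanSpace ℝ (Fin N) → ℝ}
    (hu : Continuous u) :
    Measurable fun z : ℝ × EuclideanSpace ℝ (Fin N) × EuclideanSpace ℝ (Fin N) ↦
      interactionLayer s G u z.1 z.2.1 z.2.2 := by
  have hG := hY.continuous_abs.measurable
  have hu' := hu.measurable
  unfold interactionLayer truncInteraction
  refine Measurable.mul (Measurable.ite (measurableSet_lt (by fun_prop) (by fun_prop)) ?_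
    measurable_const) (by fun_prop)
  exact ENNReal.measurable_ofReal.comp (hG.comp (by fun_prop))

lemma lintegral_lintegral_lintegral_rotate {α β γ : Type*} [MeasurableSpace α]
    [MeasurableSpace β] [MeasurableSpace γ] {μ : Measure α} {ν : Measure β} {τ : Measure γ}
    [SFinite μ] [SFinite ν] [SFinite τ] {f : α → β → γ → ℝ≥0∞}
    (hf : Measurable fun z : α × β × γ ↦ f z.1 z.2.1 z.2.2) :
    ∫⁻ y, ∫⁻ z, ∫⁻ x, f x y z ∂μ ∂τ ∂ν = ∫⁻ x, ∫⁻ y, ∫⁻ z, f x y z ∂τ ∂ν ∂μ := by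
  have h₁ : ∀ y, ∫⁻ z, ∫⁻ x, f x y z ∂μ ∂τ = ∫⁻ x, ∫⁻ z, f x y z ∂τ ∂μ := fun y ↦
    lintegral_lintegral_swap (hf.comp (f := fun w : γ × α ↦ (w.2, y, w.1))
      (by fun_prop)).aemeasurable
  simp_rw [h₁]
  refine lintegral_lintegral_swap (Measurable.aemeasurable ?_)
  have : Measurable fun w : (β × α) × γ ↦ f w.1.2 w.1.1 w.2 :=
    hf.comp (f := fun w : (β × α) × γ ↦ (w.1.2, w.1.1, w.2)) (by fun_prop)
  exact this.lintegral_prod_right'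

lemma lintegral_interactionLayer_eq (hY : IsYoungPair G g) {u : EuclideanSpace ℝ (Fin N) → ℝ}
    (hu : Continuous u) :
    ∫⁻ x, ∫⁻ y, ∫⁻ ρ in Ioi 0, interactionLayer s G u ρ x y =
      ∫⁻ ρ in Ioi 0, truncEnergy ρ (fun a ↦ G |a / ρ ^ s|) u *
        ENNReal.ofReal (ρ ^ (-((N : ℝ) + 1))) := by
  rw [lintegral_lintegral_lintegral_rotate (measurable_interactionLayer hY hu)]
  refine lintegral_congr fun ρ ↦ ?_
  unfold interactionLayer truncEnergy
  simp_rw [lintegral_mul_const' _ _ ENNReal.ofReal_ne_top]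

/-- The symmetric decreasing rearrangement increases the fractional Orlicz seminorm on the whole
space at most by a constant factor. -/
theorem fracSeminorm_rearrangeFun_le (hN : 1 ≤ N) (hs : 0 < s) (hY : IsYoungPair G g) {p : ℝ}
    (hp : ∀ t > 0, t * g t ≤ p * G t) {u : EuclideanSpace ℝ (Fin N) → ℝ} {K : NNReal}
    (hu : LipschitzWith K u) (hsupp : HasCompactSupport u) (hu0 : ∀ x, 0 ≤ u x) :
    fracSeminorm s G (rearrangeFun u) univ univ ≤
      ENNReal.ofReal (2 ^ (s * p) * 2 ^ ((N : ℝ) + 1)) * fracSeminorm s G u univ univ := by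
  have key := fun ρ ↦ truncEnergy_rearrangeFun_le (ρ := ρ) hN (hY.convexOn_abs_div (ρ ^ s))
    (fun a ↦ hY.G_nonneg (abs_nonneg _)) hu hsupp hu0
  unfold fracSeminorm
  simp only [Measure.restrict_univ]
  calc ∫⁻ x, ∫⁻ y, ENNReal.ofReal
        (G (|rearrangeFun u x - rearrangeFun u y| / dist x y ^ s) / dist x y ^ (N : ℝ))
    _ ≤ ∫⁻ x, ∫⁻ y, ENNReal.ofReal (2 ^ (s * p) * 2 ^ ((N : ℝ) + 1)) *
          ∫⁻ ρ in Ioi 0, interactionLayer s G (rearrangeFun u) ρ x y :=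
        lintegral_mono fun x ↦ lintegral_mono fun y ↦
          le_lintegral_interactionLayer hs hY hp _ x y
    _ = ENNReal.ofReal (2 ^ (s * p) * 2 ^ ((N : ℝ) + 1)) *
          ∫⁻ ρ in Ioi 0, truncEnergy ρ (fun a ↦ G |a / ρ ^ s|) (rearrangeFun u) *
            ENNReal.ofReal (ρ ^ (-((N : ℝ) + 1))) := by
        simp_rw [lintegral_const_mul' _ _ ENNReal.ofReal_ne_top]
        rw [lintegral_interactionLayer_eq hY (key 1).1]
    _ ≤ ENNReal.ofReal (2 ^ (s * p) * 2 ^ ((N : ℝ) + 1)) *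
          ∫⁻ ρ in Ioi 0, truncEnergy ρ (fun a ↦ G |a / ρ ^ s|) u *
            ENNReal.ofReal (ρ ^ (-((N : ℝ) + 1))) := by
        gcongr with ρ
        exact (key ρ).2
    _ ≤ _ := by
        rw [← lintegral_interactionLayer_eq hY hu.continuous]
        gcongr with x y
        exact lintegral_interactionLayer_le hN hs hY u x y

end LayerCake

section Domain

lemma infDist_frontier_le_dist {E : Type*} [NormedAddCommGroup E] [NormedSpace ℝ E] {Ω : Set E}
    (hΩ : IsOpen Ω) {x y : E} (hx : x ∈ Ω) (hy : y ∉ Ω) :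
    infDist x (frontier Ω) ≤ dist x y := by
  obtain ⟨z, hz, hzΩ⟩ : ∃ z ∈ closure Ω ∩ segment ℝ x y, z ∉ Ω := by
    by_contra! h
    exact hy ((convex_segment x y).isPreconnected.subset_of_closure_inter_subset hΩ
      ⟨x, left_mem_segment ℝ x y, hx⟩ h (right_mem_segment ℝ x y))
  have hzf : z ∈ frontier Ω := by
    rw [hΩ.frontier_eq]
    exact ⟨hz.1, hzΩ⟩
  have := dist_add_dist_of_mem_segment hz.2
  linarith [infDist_le_dist_of_mem (x := x) hzf, dist_nonneg (x := z) (y := y)]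

lemma infDist_frontier_pos {E : Type*} [NormedAddCommGroup E] [NormedSpace ℝ E] {Ω : Set E}
    (hΩ : IsOpen Ω) {x y : E} (hx : x ∈ Ω) (hy : y ∉ Ω) : 0 < infDist x (frontier Ω) := by
  refine (isClosed_frontier.notMem_iff_infDist_pos
    (nonempty_frontier_iff.2 ⟨⟨x, hx⟩, fun h ↦ hy (h ▸ mem_univ y)⟩)).1 fun h ↦ ?_
  rw [hΩ.frontier_eq] at h
  exact h.2 hx

variable {G g : ℝ → ℝ} {N : ℕ} {s : ℝ} {Ω : Set (EuclideanSpace ℝ (Fin N))}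
  {u : EuclideanSpace ℝ (Fin N) → ℝ}

lemma setLIntegral_compl_interaction_le (hs : 0 < s) (hY : IsYoungPair G g) {p : ℝ}
    (hp : ∀ t > 0, p * G t ≤ t * g t) (hΩ : IsOpen Ω) {c₁ : ℝ} (hc₁ : 0 ≤ c₁)
    {x : EuclideanSpace ℝ (Fin N)} (hx : x ∈ Ω)
    (hi : (∫⁻ y in Ωᶜ, ENNReal.ofReal (dist x y ^ (-((N : ℝ) + s * p)))) ≤
        ENNReal.ofReal (c₁ * infDist x (frontier Ω) ^ (-(s * p))))
    (hu0 : 0 ≤ u x) (huΩ : ∀ y ∉ Ω, u y = 0) :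
    ∫⁻ y in Ωᶜ, ENNReal.ofReal (G (|u x - u y| / dist x y ^ s) / dist x y ^ (N : ℝ)) ≤
      ENNReal.ofReal c₁ * ENNReal.ofReal (G (u x / infDist x (frontier Ω) ^ s)) := by
  rcases Ωᶜ.eq_empty_or_nonempty with he | ⟨z, hz⟩
  · simp [he]
  set d := infDist x (frontier Ω) with hd
  have hd0 : 0 < d := infDist_frontier_pos hΩ hx hz
  have hG0 : 0 ≤ G (u x / d ^ s) := hY.G_nonneg (by positivity)
  calc ∫⁻ y in Ωᶜ, ENNReal.ofReal (G (|u x - u y| / dist x y ^ s) / dist x y ^ (N : ℝ))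
    _ ≤ ∫⁻ y in Ωᶜ, ENNReal.ofReal (G (u x / d ^ s) * d ^ (s * p)) *
          ENNReal.ofReal (dist x y ^ (-((N : ℝ) + s * p))) := by
        refine setLIntegral_mono' hΩ.measurableSet.compl fun y hy ↦ ?_
        have hdr : d ≤ dist x y := infDist_frontier_le_dist hΩ hx hy
        have hr : 0 < dist x y := hd0.trans_le hdr
        rw [huΩ y hy, sub_zero, abs_of_nonneg hu0, ← ENNReal.ofReal_mul (by positivity)]
        refine ENNReal.ofReal_le_ofReal ?_
        rw [div_le_iff₀ (by positivity)]
        refine (hY.div_rpow_le_mul hp hs.le hu0 hd0 hdr).trans_eq ?_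
        rw [Real.div_rpow hd0.le hr.le, Real.rpow_neg hr.le, Real.rpow_add hr]
        field_simp
    _ ≤ ENNReal.ofReal (G (u x / d ^ s) * d ^ (s * p)) *
          ENNReal.ofReal (c₁ * d ^ (-(s * p))) := by
        rw [lintegral_const_mul' _ _ ENNReal.ofReal_ne_top]
        gcongr
    _ = _ := by
        rw [← ENNReal.ofReal_mul (by positivity), ← ENNReal.ofReal_mul hc₁, Real.rpow_neg hd0.le]
        congr 1
        field_simp

/-- A Hardy inequality on `Ω` bounds the fractional Orlicz seminorm on the whole space by the one
on `Ω`. -/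
theorem fracSeminorm_univ_le (hs : 0 < s) (hY : IsYoungPair G g) {p : ℝ}
    (hp : ∀ t > 0, p * G t ≤ t * g t) (hΩ : IsOpen Ω) {c₁ : ℝ} (hc₁ : 0 ≤ c₁)
    (hi : ∀ x ∈ Ω,
      (∫⁻ y in Ωᶜ, ENNReal.ofReal (dist x y ^ (-((N : ℝ) + s * p)))) ≤
        ENNReal.ofReal (c₁ * infDist x (frontier Ω) ^ (-(s * p))))
    {c₂ : ℝ} (hc₂ : 0 ≤ c₂) (hu : Continuous u) (hu0 : ∀ x, 0 ≤ u x) (huΩ : ∀ y ∉ Ω, u y = 0)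
    (hii : (∫⁻ x in Ω, ENNReal.ofReal (G (u x / infDist x (frontier Ω) ^ s))) ≤
        ENNReal.ofReal c₂ * fracSeminorm s G u Ω Ω) :
    fracSeminorm s G u univ univ ≤
      ENNReal.ofReal (1 + 2 * (c₁ * c₂)) * fracSeminorm s G u Ω Ω := by
  set F : EuclideanSpace ℝ (Fin N) → EuclideanSpace ℝ (Fin N) → ℝ≥0∞ := fun x y ↦
    ENNReal.ofReal (G (|u x - u y| / dist x y ^ s) / dist x y ^ (N : ℝ)) with hF
  have hFsymm : ∀ x y, F x y = F y x := fun x y ↦ by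
    simp only [hF]; rw [abs_sub_comm, dist_comm]
  have hFm : Measurable (Function.uncurry F) := by
    have hG := hY.continuous_abs.measurable
    have hu' := hu.measurable
    have h : Function.uncurry F = fun z ↦ ENNReal.ofReal
        (G |(u z.1 - u z.2) / dist z.1 z.2 ^ s| / dist z.1 z.2 ^ (N : ℝ)) := by
      ext ⟨x, y⟩
      simp only [Function.uncurry, hF, abs_div, abs_of_nonneg (Real.rpow_nonneg dist_nonneg s)]
    rw [h]
    exact ENNReal.measurable_ofReal.comp ((hG.comp (by fun_prop)).div (by fun_prop))
  have hsplit : ∫⁻ x, ∫⁻ y, F x y =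
      ((∫⁻ x in Ω, ∫⁻ y in Ω, F x y) + ∫⁻ x in Ω, ∫⁻ y in Ωᶜ, F x y) +
        ((∫⁻ x in Ωᶜ, ∫⁻ y in Ω, F x y) + ∫⁻ x in Ωᶜ, ∫⁻ y in Ωᶜ, F x y) := by
    rw [← lintegral_add_compl (fun x ↦ ∫⁻ y, F x y) hΩ.measurableSet]
    simp_rw [fun x ↦ (lintegral_add_compl (F x) (μ := volume) hΩ.measurableSet).symm]
    have hm : Measurable fun x ↦ ∫⁻ y in Ω, F x y := hFm.lintegral_prod_right'
    rw [lintegral_add_left hm, lintegral_add_left hm]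
  have hmixed : ∫⁻ x in Ω, ∫⁻ y in Ωᶜ, F x y ≤
      ENNReal.ofReal (c₁ * c₂) * fracSeminorm s G u Ω Ω :=
    calc ∫⁻ x in Ω, ∫⁻ y in Ωᶜ, F x y
      _ ≤ ∫⁻ x in Ω, ENNReal.ofReal c₁ *
            ENNReal.ofReal (G (u x / infDist x (frontier Ω) ^ s)) :=
          setLIntegral_mono' hΩ.measurableSet fun x hx ↦
            setLIntegral_compl_interaction_le hs hY hp hΩ hc₁ hx (hi x hx) (hu0 x) huΩ
      _ ≤ _ := by
          rw [lintegral_const_mul' _ _ ENNReal.ofReal_ne_top, ENNReal.ofReal_mul hc₁, mul_assoc]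
          gcongr
  have hswap : ∫⁻ x in Ωᶜ, ∫⁻ y in Ω, F x y = ∫⁻ x in Ω, ∫⁻ y in Ωᶜ, F x y := by
    rw [lintegral_lintegral_swap hFm.aemeasurable]
    simp_rw [hFsymm]
  have hzero : ∫⁻ x in Ωᶜ, ∫⁻ y in Ωᶜ, F x y = 0 := by
    rw [setLIntegral_congr_fun (g := fun _ ↦ 0) hΩ.measurableSet.compl fun x hx ↦ ?_]
    · simp
    · rw [setLIntegral_congr_fun (g := fun _ ↦ 0) hΩ.measurableSet.compl fun y hy ↦ ?_]
      · simp
      · simp [hF, huΩ x hx, huΩ y hy, hY.G_zero]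
  have huniv : fracSeminorm s G u univ univ = ∫⁻ x, ∫⁻ y, F x y := by
    simp only [fracSeminorm, Measure.restrict_univ, hF]
  have hc : 0 ≤ c₁ * c₂ := mul_nonneg hc₁ hc₂
  rw [huniv, hsplit, hswap, hzero, add_zero, ENNReal.ofReal_add one_pos.le (by positivity),
    two_mul, ENNReal.ofReal_add hc hc, ENNReal.ofReal_one, add_mul, one_mul, add_mul, ← add_assoc]
  gcongr
  rfl

end Domain

/-- rearrangement bound assuming the integral estimate for the complement
kernel and the fractional Orlicz–Hardy inequality on `Ω`. -/
theorem rearrangement_bound_of_hardy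
    {N : ℕ} (hN : 1 ≤ N) {s : ℝ} (hs : s ∈ Set.Ioo (0 : ℝ) 1)
    {G g : ℝ → ℝ} (hY : IsYoungPair G g) {pm pp : ℝ} (hG : GrowthCond G g pm pp)
    {Ω : Set (EuclideanSpace ℝ (Fin N))} (hΩopen : IsOpen Ω) (hΩne : Ω.Nonempty)
    {c₁ : ℝ} (hc₁ : 0 < c₁)
    (hi : ∀ x ∈ Ω,
      (∫⁻ y in Ωᶜ, ENNReal.ofReal (dist x y ^ (-((N : ℝ) + s * pm)))) ≤
        ENNReal.ofReal (c₁ * infDist x (frontier Ω) ^ (-(s * pm))))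
    {c₂ : ℝ} (hc₂ : 0 < c₂)
    (hii : ∀ u : EuclideanSpace ℝ (Fin N) → ℝ, IsTestFun Ω u → (∀ x, 0 ≤ u x) →
      (∫⁻ x in Ω, ENNReal.ofReal (G (u x / infDist x (frontier Ω) ^ s))) ≤
        ENNReal.ofReal c₂ * fracSeminorm s G u Ω Ω) :
    ∃ C > (0 : ℝ), ∀ u : EuclideanSpace ℝ (Fin N) → ℝ, IsTestFun Ω u → (∀ x, 0 ≤ u x) →
      fracSeminorm s G (rearrangeFun u) Set.univ Set.univ ≤
        ENNReal.ofReal C * fracSeminorm s G u Ω Ω := by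
  obtain ⟨hs0, -⟩ := hs
  obtain ⟨-, -, hgrowth⟩ := hG
  refine ⟨2 ^ (s * pp) * 2 ^ ((N : ℝ) + 1) * (1 + 2 * (c₁ * c₂)), by positivity,
    fun u hu hu0 ↦ ?_⟩
  have huΩ : ∀ y ∉ Ω, u y = 0 := fun y hy ↦
    image_eq_zero_of_notMem_tsupport fun h ↦ hy (hu.2.2 h)
  obtain ⟨K, hK⟩ := hu.1.lipschitzWith_of_hasCompactSupport hu.2.1 (by simp)
  rw [ENNReal.ofReal_mul (by positivity), mul_assoc]
  refine (fracSeminorm_rearrangeFun_le hN hs0 hY (fun t ht ↦ (hgrowth t ht).2) hK hu.2.1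
    hu0).trans ?_
  gcongr
  exact fracSeminorm_univ_le hs0 hY (fun t ht ↦ (hgrowth t ht).1) hΩopen hc₁.le hi hc₂.le
    hK.continuous hu0 huΩ (hii u hu hu0)
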